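/- (Local-to-global order condition.) Let μ : W → V be a collection such that μ_{v s_i} ≥_v μ_v for all v ∈ W and all i ∈ I. Then μ_{w'} ≥_w μ_w for all w, w' ∈ W. -/

import Mathlib

namespace MV

/-- The action of a permutation `w` on `ℝ^N`: `(w·x)_k = x_{w⁻¹(k)}`. -/
def act (ℓ : ℕ) (w : Equiv.Perm (Fin (ℓ+1))) (x : Fin (ℓ+1) → ℝ) : Fin (ℓ+1) → ℝ :=
  fun k => x (w⁻¹ k)

/-- The subspace `V = {x ∈ ℝ^N : Σ x_k = 0}`. -/
def Vsub (ℓ : ℕ) : Set (Fin (ℓ+1) → ℝ) := {x | ∑ k, x k = 0}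

/-- The simple coroot `h_i = e_i - e_{i+1}` (here `i : Fin ℓ` encodes the 1-based index `i+1`). -/
def coroot (ℓ : ℕ) (i : Fin ℓ) : Fin (ℓ+1) → ℝ :=
  fun k => (if (k : ℕ) = (i : ℕ) then 1 else 0) - (if (k : ℕ) = (i : ℕ) + 1 then 1 else 0)

/-- The cone `Σ_{j∈I} ℝ_{≥0} h_j`. -/
def corootCone (ℓ : ℕ) : Set (Fin (ℓ+1) → ℝ) :=
  {x | ∃ c : Fin ℓ → ℝ, (∀ j, 0 ≤ c j) ∧ x = ∑ j, c j • coroot ℓ j}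

/-- The partial order `h ≥_w h'`. -/
def geOrd (ℓ : ℕ) (w : Equiv.Perm (Fin (ℓ+1))) (h h' : Fin (ℓ+1) → ℝ) : Prop :=
  act ℓ w⁻¹ (h - h') ∈ corootCone ℓ

/-- The simple reflection `s_i`, the transposition of (1-based) `i` and `i+1`. -/
def simpleRefl (ℓ : ℕ) (i : Fin ℓ) : Equiv.Perm (Fin (ℓ+1)) :=
  Equiv.swap i.castSucc i.succ

/-- The longest element `w₀ : k ↦ N+1-k`. -/
def w0 (ℓ : ℕ) : Equiv.Perm (Fin (ℓ+1)) := Fin.revPerm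

/-- The chamber weight functional `w·Λ_i : x ↦ x_{w(1)} + ⋯ + x_{w(i)}`. -/
def chamberWt (ℓ : ℕ) (w : Equiv.Perm (Fin (ℓ+1))) (i : Fin ℓ) (x : Fin (ℓ+1) → ℝ) : ℝ :=
  ∑ k ∈ Finset.univ.filter (fun k : Fin (ℓ+1) => (k : ℕ) ≤ (i : ℕ)), x (w k)

/-- The set `𝒱` of GGMS data. -/
def calV (ℓ : ℕ) : Set (Equiv.Perm (Fin (ℓ+1)) → Fin (ℓ+1) → ℝ) :=
  {μ | (∀ w, μ w ∈ Vsub ℓ) ∧ (∀ w w', geOrd ℓ w (μ w') (μ w)) ∧ μ (w0 ℓ) = 0}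

/-- The Cartan matrix of type `A_ℓ`. -/
def cartan (ℓ : ℕ) (i j : Fin ℓ) : ℝ :=
  if i = j then 2 else if (i : ℕ) + 1 = (j : ℕ) ∨ (j : ℕ) + 1 = (i : ℕ) then -1 else 0

/-- The linear involution `J : (Jx)_k = -x_{N+1-k}`. -/
def Jmap (ℓ : ℕ) (x : Fin (ℓ+1) → ℝ) : Fin (ℓ+1) → ℝ := fun k => - x k.rev

/-- Nat-indexed (0-based) simple coroot, used for the folded coroots. -/
def corootN (ℓ : ℕ) (j : ℕ) : Fin (ℓ+1) → ℝ :=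
  fun k => (if (k : ℕ) = j then 1 else 0) - (if (k : ℕ) = j + 1 then 1 else 0)

/-- The folded simple coroot `h_j^ω` (here `j : Fin n` encodes the 1-based index `j+1`):
`h_j^ω = h_j + h_{ℓ+1-j}` for `1 ≤ j ≤ n-1`, `h_n^ω = h_n` if `ℓ = 2n-1`, and
`h_n^ω = 2(h_n + h_{n+1})` if `ℓ = 2n`. -/
def fcoroot (ℓ n : ℕ) (j : Fin n) : Fin (ℓ+1) → ℝ :=
  if (j : ℕ) + 1 < n then corootN ℓ j + corootN ℓ (ℓ - 1 - j)
  else if ℓ = 2 * n - 1 then corootN ℓ j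
  else (2 : ℝ) • (corootN ℓ j + corootN ℓ ((j : ℕ) + 1))

/-- The folded coroot cone `Σ_{j=1}^{n} ℝ_{≥0} h_j^ω`. -/
def fcone (ℓ n : ℕ) : Set (Fin (ℓ+1) → ℝ) :=
  {x | ∃ c : Fin n → ℝ, (∀ j, 0 ≤ c j) ∧ x = ∑ j, c j • fcoroot ℓ n j}


/-- The simple transposition `s_{a+1}` (0-based `a`) in the symmetric group of `{1,…,m+1}`. -/
def swN (m a : ℕ) : Equiv.Perm (Fin (m+1)) :=
  if h : a + 1 ≤ m then Equiv.swap ⟨a, by omega⟩ ⟨a + 1, by omega⟩ else 1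

end MV

open MV

/-!
The partial sums `Λ_m x = x_1 + ⋯ + x_m` are dual to the simple coroots, so the cone spanned by the
`h_j` is cut out of `V` by the inequalities `0 ≤ Λ_m x`. Since `s_i x - x` is a multiple of `h_i`,
the reflection `s_i` preserves every `Λ_m` with `m ≠ i`. Comparing the hypothesis at `v` with the
one at `v s_i` therefore kills all coefficients of `v⁻¹ (μ_{v s_i} - μ_v)` except the `i`-th, and
`μ_{v s_i} - μ_v = c · v h_i` with `c ≥ 0`.

Now write `w' = w u` and build `u` from the identity by simple reflections that increase its length.
A step from `u` to `u s_i` has `u(i) < u(i+1)` and adds `c · w u h_i` to `μ_{w u}`. As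
`u h_i = e_{u(i)} - e_{u(i+1)}` is a positive coroot, this is an increase for `≥_w`.
-/

theorem eq_zero_of_forall_sum_Iic_eq_zero {ι M : Type*} [PartialOrder ι] [LocallyFiniteOrderBot ι]
    [WellFoundedLT ι] [AddCommMonoid M] {x : ι → M} (h : ∀ k, ∑ j ∈ Finset.Iic k, x j = 0) :
    x = 0 := by
  funext k
  induction k using WellFoundedLT.induction with
  | _ k ih =>
    have hlt : ∑ j ∈ Finset.Iio k, x j = 0 :=
      Finset.sum_eq_zero fun j hj => ih j (Finset.mem_Iio.1 hj)
    simpa only [← Finset.add_sum_Iio_eq_sum_Iic, hlt, add_zero, Pi.zero_apply] using h k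

namespace MV

variable {ℓ : ℕ}

section Permutations

theorem simpleRefl_inv (i : Fin ℓ) : (simpleRefl ℓ i)⁻¹ = simpleRefl ℓ i :=
  Equiv.swap_inv _ _

theorem mul_simpleRefl_mul_simpleRefl (v : Equiv.Perm (Fin (ℓ + 1))) (i : Fin ℓ) :
    v * simpleRefl ℓ i * simpleRefl ℓ i = v :=
  Equiv.mul_swap_mul_self _ _ v

theorem exists_succ_lt_castSucc_of_ne_one {u : Equiv.Perm (Fin (ℓ + 1))} (hu : u ≠ 1) :
    ∃ i : Fin ℓ, u i.succ < u i.castSucc := by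
  by_contra! h
  exact hu (u.monotone_iff.1 (Fin.monotone_iff_le_succ.2 h))

theorem toLex_mul_simpleRefl_lt {u : Equiv.Perm (Fin (ℓ + 1))} {i : Fin ℓ}
    (hi : u i.succ < u i.castSucc) : toLex ⇑(u * simpleRefl ℓ i) < toLex ⇑u :=
  Pi.lex_desc Fin.castSucc_lt_succ.le hi

theorem perm_ascent_induction {P : Equiv.Perm (Fin (ℓ + 1)) → Prop} (one : P 1)
    (ascent : ∀ u (i : Fin ℓ), u i.castSucc < u i.succ → P u → P (u * simpleRefl ℓ i))
    (u : Equiv.Perm (Fin (ℓ + 1))) : P u := by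
  induction u using WellFounded.induction
    (InvImage.wf (fun u : Equiv.Perm (Fin (ℓ + 1)) => toLex ⇑u) wellFounded_lt) with
  | _ u ih =>
    by_cases hu : u = 1
    · exact hu ▸ one
    · obtain ⟨i, hi⟩ := exists_succ_lt_castSucc_of_ne_one hu
      have hascent : (u * simpleRefl ℓ i) i.castSucc < (u * simpleRefl ℓ i) i.succ := by
        simpa [simpleRefl] using hi
      have hstep := ascent _ i hascent (ih _ (toLex_mul_simpleRefl_lt hi))
      rwa [mul_simpleRefl_mul_simpleRefl] at hstep

end Permutations

section Action

theorem act_one (x : Fin (ℓ + 1) → ℝ) : act ℓ 1 x = x :=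
  rfl

theorem act_mul (u v : Equiv.Perm (Fin (ℓ + 1))) (x : Fin (ℓ + 1) → ℝ) :
    act ℓ (u * v) x = act ℓ u (act ℓ v x) := by
  funext k
  simp only [act, mul_inv_rev, Equiv.Perm.mul_apply]

theorem act_neg (u : Equiv.Perm (Fin (ℓ + 1))) (x : Fin (ℓ + 1) → ℝ) : act ℓ u (-x) = -act ℓ u x :=
  rfl

theorem act_smul (u : Equiv.Perm (Fin (ℓ + 1))) (c : ℝ) (x : Fin (ℓ + 1) → ℝ) :
    act ℓ u (c • x) = c • act ℓ u x :=
  rfl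

end Action

section Coroots

theorem coroot_eq_single_sub_single (i : Fin ℓ) :
    coroot ℓ i = Pi.single i.castSucc 1 - Pi.single i.succ 1 := by
  funext k
  simp [coroot, Pi.single_apply, Fin.ext_iff]

theorem act_coroot (u : Equiv.Perm (Fin (ℓ + 1))) (i : Fin ℓ) :
    act ℓ u (coroot ℓ i) = Pi.single (u i.castSucc) 1 - Pi.single (u i.succ) 1 := by
  funext k
  simp only [act, coroot_eq_single_sub_single, Pi.sub_apply, Pi.single_apply,
    Equiv.Perm.inv_eq_iff_eq]

theorem act_simpleRefl (i : Fin ℓ) (x : Fin (ℓ + 1) → ℝ) :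
    act ℓ (simpleRefl ℓ i) x = x - (x i.castSucc - x i.succ) • coroot ℓ i := by
  have hne : i.succ ≠ i.castSucc := Fin.castSucc_lt_succ.ne'
  funext k
  rcases eq_or_ne k i.castSucc with rfl | hcast
  · simp [act, simpleRefl, coroot_eq_single_sub_single, hne.symm]
  rcases eq_or_ne k i.succ with rfl | hsucc
  · simp [act, simpleRefl, coroot_eq_single_sub_single, hne]
  · simp [act, simpleRefl, coroot_eq_single_sub_single, Equiv.swap_apply_of_ne_of_ne, hcast, hsucc]

theorem mem_Vsub {x : Fin (ℓ + 1) → ℝ} : x ∈ Vsub ℓ ↔ ∑ k, x k = 0 :=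
  Iff.rfl

theorem coroot_mem_Vsub (i : Fin ℓ) : coroot ℓ i ∈ Vsub ℓ := by
  simp [mem_Vsub, coroot_eq_single_sub_single]

theorem sum_smul_coroot_mem_Vsub (c : Fin ℓ → ℝ) : ∑ j, c j • coroot ℓ j ∈ Vsub ℓ := by
  simp only [mem_Vsub, Finset.sum_apply, Pi.smul_apply]
  rw [Finset.sum_comm]
  simp only [← Finset.smul_sum, mem_Vsub.1 (coroot_mem_Vsub _), smul_zero, Finset.sum_const_zero]

/-- The fundamental weight `Λ_m`, as the linear form `x ↦ x_1 + ⋯ + x_m` on `ℝ^N`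
(`m : Fin ℓ` encodes the 1-based index `m+1`). -/
def fundamentalWeight (m : Fin ℓ) : (Fin (ℓ + 1) → ℝ) →ₗ[ℝ] ℝ :=
  ∑ k ∈ Finset.Iic m.castSucc, LinearMap.proj k

theorem fundamentalWeight_apply (m : Fin ℓ) (x : Fin (ℓ + 1) → ℝ) :
    fundamentalWeight m x = ∑ k ∈ Finset.Iic m.castSucc, x k := by
  simp [fundamentalWeight]

theorem fundamentalWeight_single (m : Fin ℓ) (a : Fin (ℓ + 1)) :
    fundamentalWeight m (Pi.single a 1) = if a ≤ m.castSucc then 1 else 0 := by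
  simp [fundamentalWeight_apply]

theorem fundamentalWeight_coroot (m j : Fin ℓ) :
    fundamentalWeight m (coroot ℓ j) = if j = m then 1 else 0 := by
  rw [coroot_eq_single_sub_single, map_sub, fundamentalWeight_single, fundamentalWeight_single]
  rcases lt_trichotomy j m with h | rfl | h
  · simp [h.le, h.ne, Fin.succ_le_castSucc_iff.2 h]
  · simp
  · simp [h.not_ge, h.ne', h.le]

theorem fundamentalWeight_sum_smul_coroot (m : Fin ℓ) (c : Fin ℓ → ℝ) :
    fundamentalWeight m (∑ j, c j • coroot ℓ j) = c m := by
  simp [fundamentalWeight_coroot]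

theorem fundamentalWeight_act_simpleRefl {m i : Fin ℓ} (h : i ≠ m) (x : Fin (ℓ + 1) → ℝ) :
    fundamentalWeight m (act ℓ (simpleRefl ℓ i) x) = fundamentalWeight m x := by
  simp [act_simpleRefl, fundamentalWeight_coroot, h]

theorem eq_zero_of_fundamentalWeight_eq_zero {x : Fin (ℓ + 1) → ℝ} (hx : x ∈ Vsub ℓ)
    (h : ∀ m, fundamentalWeight m x = 0) : x = 0 := by
  refine eq_zero_of_forall_sum_Iic_eq_zero fun k => ?_
  cases k using Fin.lastCases with
  | last => simpa [← Fin.top_eq_last] using mem_Vsub.1 hx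
  | cast m => rw [← fundamentalWeight_apply, h]

theorem eq_sum_fundamentalWeight_smul_coroot {x : Fin (ℓ + 1) → ℝ} (hx : x ∈ Vsub ℓ) :
    x = ∑ j, fundamentalWeight j x • coroot ℓ j := by
  refine sub_eq_zero.1 (eq_zero_of_fundamentalWeight_eq_zero ?_ fun m => ?_)
  · have hsum := sum_smul_coroot_mem_Vsub fun j => fundamentalWeight j x
    rw [mem_Vsub] at hx hsum ⊢
    simp only [Pi.sub_apply, Finset.sum_sub_distrib, hx, hsum, sub_zero]
  · rw [map_sub, fundamentalWeight_sum_smul_coroot, sub_self]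

end Coroots

section Cone

theorem mem_corootCone_iff {x : Fin (ℓ + 1) → ℝ} :
    x ∈ corootCone ℓ ↔ x ∈ Vsub ℓ ∧ ∀ m, 0 ≤ fundamentalWeight m x := by
  constructor
  · rintro ⟨c, hc, rfl⟩
    exact ⟨sum_smul_coroot_mem_Vsub c, fun m =>
      (hc m).trans_eq (fundamentalWeight_sum_smul_coroot m c).symm⟩
  · rintro ⟨hx, hnonneg⟩
    exact ⟨fun m => fundamentalWeight m x, hnonneg, eq_sum_fundamentalWeight_smul_coroot hx⟩

theorem zero_mem_corootCone : (0 : Fin (ℓ + 1) → ℝ) ∈ corootCone ℓ :=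
  ⟨0, fun _ => le_rfl, by simp⟩

theorem add_mem_corootCone {x y : Fin (ℓ + 1) → ℝ} (hx : x ∈ corootCone ℓ)
    (hy : y ∈ corootCone ℓ) : x + y ∈ corootCone ℓ := by
  obtain ⟨c, hc, rfl⟩ := hx
  obtain ⟨d, hd, rfl⟩ := hy
  exact ⟨c + d, fun j => add_nonneg (hc j) (hd j), by simp [add_smul, Finset.sum_add_distrib]⟩

theorem smul_mem_corootCone {a : ℝ} (ha : 0 ≤ a) {x : Fin (ℓ + 1) → ℝ} (hx : x ∈ corootCone ℓ) :
    a • x ∈ corootCone ℓ := by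
  obtain ⟨c, hc, rfl⟩ := hx
  exact ⟨a • c, fun j => mul_nonneg ha (hc j), by simp [Finset.smul_sum, mul_smul]⟩

theorem single_sub_single_mem_corootCone {a b : Fin (ℓ + 1)} (h : a ≤ b) :
    Pi.single a 1 - Pi.single b 1 ∈ corootCone ℓ := by
  refine mem_corootCone_iff.2 ⟨by simp [mem_Vsub], fun m => ?_⟩
  rw [map_sub, fundamentalWeight_single, fundamentalWeight_single, sub_nonneg]
  by_cases hb : b ≤ m.castSucc
  · simp [hb, h.trans hb]
  · simp only [hb, if_false]
    positivity

theorem exists_eq_smul_coroot {x : Fin (ℓ + 1) → ℝ} {i : Fin ℓ} (hx : x ∈ corootCone ℓ)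
    (hneg : -act ℓ (simpleRefl ℓ i) x ∈ corootCone ℓ) : ∃ c : ℝ, 0 ≤ c ∧ x = c • coroot ℓ i := by
  obtain ⟨hV, hnonneg⟩ := mem_corootCone_iff.1 hx
  have hzero (j : Fin ℓ) (hj : j ≠ i) : fundamentalWeight j x = 0 := by
    have hnonpos := (mem_corootCone_iff.1 hneg).2 j
    rw [map_neg, fundamentalWeight_act_simpleRefl hj.symm, neg_nonneg] at hnonpos
    exact hnonpos.antisymm (hnonneg j)
  refine ⟨fundamentalWeight i x, hnonneg i, (eq_sum_fundamentalWeight_smul_coroot hV).trans ?_⟩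
  exact Fintype.sum_eq_single i fun j hj => by rw [hzero j hj, zero_smul]

end Cone

section Order

theorem geOrd_refl (w : Equiv.Perm (Fin (ℓ + 1))) (x : Fin (ℓ + 1) → ℝ) : geOrd ℓ w x x := by
  rw [geOrd, sub_self]
  exact zero_mem_corootCone

theorem geOrd_trans {w : Equiv.Perm (Fin (ℓ + 1))} {x y z : Fin (ℓ + 1) → ℝ}
    (hxy : geOrd ℓ w x y) (hyz : geOrd ℓ w y z) : geOrd ℓ w x z := by
  rw [geOrd, ← sub_add_sub_cancel x y z]
  exact add_mem_corootCone hxy hyz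

theorem exists_sub_eq_smul_act_coroot {v : Equiv.Perm (Fin (ℓ + 1))} {i : Fin ℓ}
    {x y : Fin (ℓ + 1) → ℝ} (hyx : geOrd ℓ v y x) (hxy : geOrd ℓ (v * simpleRefl ℓ i) x y) :
    ∃ c : ℝ, 0 ≤ c ∧ y - x = c • act ℓ v (coroot ℓ i) := by
  have hneg : -act ℓ (simpleRefl ℓ i) (act ℓ v⁻¹ (y - x)) ∈ corootCone ℓ := by
    rwa [geOrd, mul_inv_rev, simpleRefl_inv, act_mul, ← neg_sub, act_neg, act_neg] at hxy
  obtain ⟨c, hc, heq⟩ := exists_eq_smul_coroot hyx hneg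
  exact ⟨c, hc, by rw [← act_smul, ← heq, ← act_mul, mul_inv_cancel, act_one]⟩

theorem geOrd_of_ascent {w u : Equiv.Perm (Fin (ℓ + 1))} {i : Fin ℓ} {x y : Fin (ℓ + 1) → ℝ}
    (hu : u i.castSucc < u i.succ) (hyx : geOrd ℓ (w * u) y x)
    (hxy : geOrd ℓ (w * u * simpleRefl ℓ i) x y) : geOrd ℓ w y x := by
  obtain ⟨c, hc, hsub⟩ := exists_sub_eq_smul_act_coroot hyx hxy
  have hact : act ℓ w⁻¹ (y - x) = c • act ℓ u (coroot ℓ i) := by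
    rw [hsub, act_smul, ← act_mul, inv_mul_cancel_left]
  rw [geOrd, hact, act_coroot]
  exact smul_mem_corootCone hc (single_sub_single_mem_corootCone hu.le)

end Order

end MV

theorem stmt7_general (ℓ : ℕ) (μ : Equiv.Perm (Fin (ℓ + 1)) → Fin (ℓ + 1) → ℝ)
    (hloc : ∀ (v : Equiv.Perm (Fin (ℓ + 1))) (i : Fin ℓ),
      geOrd ℓ v (μ (v * simpleRefl ℓ i)) (μ v)) (w w' : Equiv.Perm (Fin (ℓ + 1))) :
    geOrd ℓ w (μ w') (μ w) := by
  suffices hmul : ∀ u, geOrd ℓ w (μ (w * u)) (μ w) by simpa using hmul (w⁻¹ * w')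
  intro u
  induction u using perm_ascent_induction with
  | one => simpa using geOrd_refl w (μ w)
  | ascent u i hu ih =>
    have hback := hloc (w * u * simpleRefl ℓ i) i
    rw [mul_simpleRefl_mul_simpleRefl] at hback
    rw [← mul_assoc]
    exact geOrd_trans (geOrd_of_ascent hu (hloc (w * u) i) hback) ih

/-- local-to-global order condition: if `μ_{v s_i} ≥_v μ_v` for all `v, i`,
then `μ_{w'} ≥_w μ_w` for all `w, w'`. -/
theorem stmt7 (ℓ : ℕ) (hℓ : 3 ≤ ℓ)
    (μ : Equiv.Perm (Fin (ℓ+1)) → Fin (ℓ+1) → ℝ) (hV : ∀ w, μ w ∈ Vsub ℓ)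
    (hloc : ∀ (v : Equiv.Perm (Fin (ℓ+1))) (i : Fin ℓ),
      geOrd ℓ v (μ (v * simpleRefl ℓ i)) (μ v)) :
    ∀ w w', geOrd ℓ w (μ w') (μ w) := by
  exact stmt7_general ℓ μ hloc
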